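/- arXiv:1905.08470 — 2 statements merged into one kernel-verified Lean document; each statement's English description precedes it below -/
import Mathlib

section
/- In the semi-primitive cyclotomic setting, assume |T_0| = (q−1)/2 and |T_1| = (q+1)/2 and define E_1 = {(x,xy) : x ∈ D_0, y ∈ A_0} ∪ {(x,xy) : x ∈ D_1, y ∈ A_1}. Then E_1 is a set of type Q in F_{q²} × F_{q²}. -/
noncomputable section

def zetaP (p : ℕ) : ℂ := Complex.exp (2 * Real.pi * Complex.I / p)

/-- The canonical additive character `ψ(x) = ζ_p^{Tr_{L/F_p}(x)}`. -/
def psiL (p : ℕ) (L : Type) [Field L] [Fintype L] [CharP L p] (x : L) : ℂ :=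
  letI : Algebra (ZMod p) L := ZMod.algebra L p
  zetaP p ^ (Algebra.trace (ZMod p) L x).val

/-- `ψ_{a,b}(E) = Σ_{(x,y)∈E} ψ(ax+by)`. -/
def psiSum (p : ℕ) (L : Type) [Field L] [Fintype L] [CharP L p]
    (a b : L) (E : Set (L × L)) : ℂ :=
  ∑ᶠ z ∈ E, psiL p L (a * z.1 + b * z.2)

/-- a subset of `F_{q²} × F_{q²}` of type Q. -/
def IsTypeQ (p q : ℕ) (L : Type) [Field L] [Fintype L] [CharP L p]
    (E : Set (L × L)) : Prop :=
  E.ncard = (q ^ 4 - 1) / 4 ∧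
    ∀ a b : L, (a, b) ≠ ((0 : L), (0 : L)) →
      psiSum p L a b E = ((q : ℂ) ^ 2 - 1) / 4 ∨
      psiSum p L a b E = (-3 * (q : ℂ) ^ 2 - 1) / 4

/-- the cyclotomic class `C_i^{(N,q²)} = ω^i⟨ω^N⟩`. -/
def cyc (L : Type) [Field L] (ω : L) (N i : ℕ) : Set L :=
  {x | ∃ k : ℕ, x = ω ^ i * (ω ^ N) ^ k}

/-- ω is a primitive element (generator of the multiplicative group). -/
def IsPrim (L : Type) [Field L] (ω : L) : Prop :=
  ∀ x : L, x ≠ 0 → ∃ n : ℕ, x = ω ^ n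

open Classical in
theorem xx_gen {K L : Type} [Field K] [Field L] [Algebra K L] (h2 : Module.finrank K L = 2)
    (W : Submodule K L) (hb : W ≠ ⊥) (ht : W ≠ ⊤) :
    ∃ u : L, u ≠ 0 ∧ ∀ w, w ∈ W ↔ ∃ c : K, c • u = w := by
  have : FiniteDimensional K L := FiniteDimensional.of_finrank_pos (by omega)
  have h1 : Module.finrank K W < 2 := h2 ▸ Submodule.finrank_lt ht
  have h0 : Module.finrank K W ≠ 0 := fun h => hb (Submodule.finrank_eq_zero.mp h)
  have h : Module.finrank K W = 1 := by omega
  obtain ⟨v, hv, hs⟩ := finrank_eq_one_iff'.mp h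
  refine ⟨v, by simpa using hv, fun w => ⟨fun hw => ?_, ?_⟩⟩
  · obtain ⟨c, hc⟩ := hs ⟨w, hw⟩
    exact ⟨c, by simpa using congrArg Subtype.val hc⟩
  · rintro ⟨c, rfl⟩
    exact W.smul_mem c v.2

open Classical in
theorem xx_ncard {α : Type} [Fintype α] (T : Set α) :
    (T.ncard : ℂ) = ∑ c, if c ∈ T then (1:ℂ) else 0 := by
  rw [Finset.sum_boole, Set.ncard_eq_toFinset_card']
  congr 2
  ext; simp

set_option linter.unusedSectionVars false

section
variable {K L : Type} [Field K] [Fintype K] [Field L] [Fintype L] [Algebra K L]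

open Classical in
theorem xx_csum (χ : AddChar L ℂ) (w : L) :
    ∑ c : K, χ (c • w) = if (∀ c : K, χ (c • w) = 1) then (Fintype.card K : ℂ) else 0 := by
  let θ : AddChar K ℂ :=
    { toFun := fun c => χ (c • w)
      map_zero_eq_one' := by simp
      map_add_eq_mul' := fun a b => by simp [add_smul, AddChar.map_add_eq_mul] }
  have h := AddChar.sum_eq_ite θ
  have h' : (θ = 0) ↔ (∀ c : K, χ (c • w) = 1) := by
    constructor
    · intro h c
      have : θ c = 1 := by rw [h]; rfl
      exact this
    · intro h
      ext c
      exact h c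
  simp only [h'] at h
  exact h

theorem xx_charker (h2 : Module.finrank K L = 2) (χ : AddChar L ℂ) (hχ : χ ≠ 0) :
    ∃ u : L, u ≠ 0 ∧ ∀ w, (∀ c : K, χ (c • w) = 1) ↔ ∃ c : K, c • u = w := by
  classical
  let W : Submodule K L :=
    { carrier := {w | ∀ c : K, χ (c • w) = 1}
      zero_mem' := by simp
      add_mem' := by
        intro a b ha hb c
        rw [smul_add, AddChar.map_add_eq_mul, ha c, hb c, one_mul]
      smul_mem' := by
        intro d a ha c
        rw [smul_smul]; exact ha _ }
  have hcard : Fintype.card L = Fintype.card K ^ 2 := by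
    rw [← h2]; exact Module.card_eq_pow_finrank
  have hq : 1 < Fintype.card K := Fintype.one_lt_card
  refine xx_gen h2 W ?_ ?_
  · intro hW
    have hm : ∀ w : L, (∀ c : K, χ (c • w) = 1) ↔ w = 0 := by
      intro w
      have : w ∈ W ↔ w ∈ (⊥ : Submodule K L) := by rw [hW]
      rw [Submodule.mem_bot] at this
      exact this
    have e1 : ∑ w : L, ∑ c : K, χ (c • w) = Fintype.card K := by
      simp only [xx_csum, hm]
      simp
    rw [Finset.sum_comm] at e1
    have e2 : ∀ c : K, ∑ w : L, χ (c • w) = if c = 0 then (Fintype.card L : ℂ) else 0 := by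
      intro c
      split_ifs with hc
      · simp [hc]
      · rw [← (AddChar.sum_eq_zero_iff_ne_zero.mpr hχ)]
        exact Fintype.sum_equiv (MulAction.toPerm (Units.mk0 c hc)) _ _ (fun x => rfl)
    simp only [e2] at e1
    simp only [Finset.sum_ite_eq', Finset.mem_univ, if_true] at e1
    have : Fintype.card L = Fintype.card K := by exact_mod_cast e1
    nlinarith
  · intro hW
    apply hχ
    ext x
    have : x ∈ W := by rw [hW]; trivial
    simpa using this 1

open Classical in
theorem xx_sum_line (v : L) (hv : v ≠ 0) (f : L → ℂ) :
    ∑ x, (if ∃ c : K, c • v = x then f x else 0) = ∑ c : K, f (c • v) := by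
  rw [← Finset.sum_filter]
  symm
  refine Finset.sum_bij (fun c _ => c • v) ?_ ?_ ?_ ?_
  · intro c _; simp
  · intro a _ b _ h; exact smul_left_injective K hv h
  · intro x hx
    obtain ⟨c, hc⟩ := (Finset.mem_filter.mp hx).2
    exact ⟨c, Finset.mem_univ _, hc⟩
  · intros; rfl

theorem xx_sum_inv (τ : L → ℂ) (h0 : τ 0 = 0) (hi : ∀ c : K, c ≠ 0 → ∀ x, τ (c • x) = τ x) (v : L) :
    ∑ c : K, τ (c • v) = ((Fintype.card K : ℂ) - 1) * τ v := by
  classical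
  rw [← Finset.add_sum_erase _ _ (Finset.mem_univ (0 : K)), zero_smul, h0, zero_add,
    Finset.sum_congr rfl (g := fun _ => τ v)]
  · rw [Finset.sum_const, Finset.card_erase_of_mem (Finset.mem_univ _), Finset.card_univ,
      nsmul_eq_mul, Nat.cast_sub Fintype.card_pos]
    simp
  · intro c hc
    exact hi c (Finset.ne_of_mem_erase hc) v

theorem xx_qne : ((Fintype.card K : ℂ) - 1) ≠ 0 := by
  have hq : 1 < Fintype.card K := Fintype.one_lt_card
  intro h
  have : (Fintype.card K : ℂ) = 1 := by linear_combination h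
  have : Fintype.card K = 1 := by exact_mod_cast this
  omega

theorem xx_gsum (χ : AddChar L ℂ) (u : L) (hu0 : u ≠ 0)
    (hu : ∀ w, (∀ c : K, χ (c • w) = 1) ↔ ∃ c : K, c • u = w)
    (σ : L → ℂ) (h0 : σ 0 = 0) (hi : ∀ c : K, c ≠ 0 → ∀ x, σ (c • x) = σ x)
    (hs : ∑ x, σ x = 0) (z : L) :
    ∑ x, σ x * χ (z * x) = Fintype.card K * σ (u / z) := by
  classical
  by_cases hz : z = 0
  · simp [hz, h0, hs]
  have e1 : ∑ c : K, ∑ x, σ x * χ (c • (z * x)) =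
      ((Fintype.card K : ℂ) - 1) * ∑ x, σ x * χ (z * x) := by
    rw [← xx_sum_inv (K := K) (fun y => ∑ x, σ x * χ (y * x)) (by simp [hs])]
    · simp
    · intro c hc y
      refine Fintype.sum_equiv (MulAction.toPerm (Units.mk0 c hc)) _ _ (fun x => ?_)
      simp [hi c hc, Units.smul_def]
  rw [Finset.sum_comm] at e1
  simp only [← Finset.mul_sum, xx_csum, hu] at e1
  have e2 : ∀ x, (∃ c : K, c • u = z * x) ↔ (∃ c : K, c • (u / z) = x) := by
    intro x
    refine exists_congr fun c => ?_
    rw [div_eq_mul_inv, ← smul_mul_assoc, ← div_eq_mul_inv, div_eq_iff hz, mul_comm x z]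
  simp only [e2, mul_ite, mul_zero] at e1
  rw [xx_sum_line (u / z) (div_ne_zero hu0 hz), ← Finset.sum_mul, xx_sum_inv σ h0 hi] at e1
  apply mul_left_cancel₀ (xx_qne (K := K))
  linear_combination -e1

open Classical in
theorem xx_Fline (φ : L →ₗ[K] K) (k : L) (hk0 : k ≠ 0) (hk : ∀ y, φ y = 0 ↔ ∃ c : K, c • k = y)
    (τ : L → ℂ) (h0 : τ 0 = 0) (hi : ∀ c : K, c ≠ 0 → ∀ x, τ (c • x) = τ x)
    (hs : ∑ x, τ x = 0) (b : L) (hb : b ≠ 0) (c : K) :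
    ∑ y, (if φ y = c then τ (b * y) else 0) =
      τ (b * k) * ((if c = 0 then (Fintype.card K : ℂ) else 0) - 1) := by
  have hF0 : ∑ y, (if φ y = 0 then τ (b * y) else 0) = ((Fintype.card K : ℂ) - 1) * τ (b * k) := by
    simp only [hk]
    rw [xx_sum_line k hk0]
    simp only [mul_smul_comm]
    exact xx_sum_inv τ h0 hi _
  have hFc : ∀ c : K, c ≠ 0 → ∑ y, (if φ y = c then τ (b * y) else 0) =
      ∑ y, (if φ y = 1 then τ (b * y) else 0) := by
    intro c hc
    symm
    refine Fintype.sum_equiv (MulAction.toPerm (Units.mk0 c hc)) _ _ (fun y => ?_)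
    have : φ (c • y) = c ↔ φ y = 1 := by simp [hc]
    simp only [MulAction.toPerm_apply, Units.smul_def, Units.val_mk0, this, mul_smul_comm, hi c hc]
  have hall : ∑ c : K, ∑ y, (if φ y = c then τ (b * y) else 0) = 0 := by
    rw [Finset.sum_comm]
    simp only [Finset.sum_ite_eq, Finset.mem_univ, if_true]
    rw [← hs]
    exact Fintype.sum_equiv (Equiv.mulLeft₀ b hb) _ _ (fun x => rfl)
  rw [← Finset.add_sum_erase _ _ (Finset.mem_univ (0 : K)), hF0,
    Finset.sum_congr rfl (fun c hc => hFc c (Finset.ne_of_mem_erase hc)), Finset.sum_const,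
    Finset.card_erase_of_mem (Finset.mem_univ _), Finset.card_univ,
      nsmul_eq_mul, Nat.cast_sub Fintype.card_pos, Nat.cast_one, ← mul_add] at hall
  have h1 := (mul_eq_zero.mp hall).resolve_left xx_qne
  by_cases hc : c = 0
  · subst hc
    rw [hF0]; simp; ring
  · rw [hFc c hc]; simp [hc]; linear_combination h1

open Classical in
theorem xx_Sline (φ : L →ₗ[K] K) (k : L) (hk0 : k ≠ 0) (hk : ∀ y, φ y = 0 ↔ ∃ c : K, c • k = y)
    (τ : L → ℂ) (h0 : τ 0 = 0) (hi : ∀ c : K, c ≠ 0 → ∀ x, τ (c • x) = τ x)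
    (hs : ∑ x, τ x = 0) (b : L) (hb : b ≠ 0) (T : Set K) (y0 : L) :
    ∑ y, (if φ y ∈ T then τ (b * (y - y0)) else 0) =
      τ (b * k) * ((if φ y0 ∈ T then (Fintype.card K : ℂ) else 0) - T.ncard) := by
  have e1 : ∑ y, (if φ y ∈ T then τ (b * (y - y0)) else 0) =
      ∑ y, (if φ y + φ y0 ∈ T then τ (b * y) else 0) := by
    refine Fintype.sum_equiv (Equiv.subRight y0) _ _ (fun y => ?_)
    simp
  have e2 : ∑ y, (if φ y + φ y0 ∈ T then τ (b * y) else 0) =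
      ∑ c : K, if c + φ y0 ∈ T then ∑ y, (if φ y = c then τ (b * y) else 0) else 0 := by
    have : ∀ c : K, (if c + φ y0 ∈ T then ∑ y, (if φ y = c then τ (b * y) else 0) else 0) =
        ∑ y, (if φ y = c then (if c + φ y0 ∈ T then τ (b * y) else 0) else 0) := by
      intro c
      split_ifs <;> simp
    simp only [this]
    rw [Finset.sum_comm]
    simp
  rw [e1, e2]
  simp only [xx_Fline φ k hk0 hk τ h0 hi hs b hb]
  have e3 : ∑ c : K, (if c + φ y0 ∈ T then (1:ℂ) else 0) = T.ncard := by
    rw [xx_ncard]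
    exact Fintype.sum_equiv (Equiv.addRight (φ y0)) _ _ (fun y => by
      by_cases hy : y + φ y0 ∈ T <;> simp [hy])
  rw [← e3]
  have e4 : (if φ y0 ∈ T then (Fintype.card K : ℂ) else 0) =
      ∑ c : K, if c = 0 then (if c + φ y0 ∈ T then (Fintype.card K : ℂ) else 0) else 0 := by
    simp
  rw [e4, ← Finset.sum_sub_distrib, Finset.mul_sum]
  refine Finset.sum_congr rfl fun c _ => ?_
  split_ifs <;> simp

/-- Full double sum, split in the trivial part and the sign part. -/
theorem xx_total [DecidableEq L] (χ : AddChar L ℂ) (hχ : χ ≠ 0) (u : L) (hu0 : u ≠ 0)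
    (hu : ∀ w, (∀ c : K, χ (c • w) = 1) ↔ ∃ c : K, c • u = w)
    (σ : L → ℂ) (h0 : σ 0 = 0) (hi : ∀ c : K, c ≠ 0 → ∀ x, σ (c • x) = σ x)
    (hs : ∑ x, σ x = 0) (h g : L → ℂ) (a b : L) :
    ∑ x, ∑ y, ((if x = 0 then 0 else h y) + σ x * g y) / 2 * χ (x * (a + b * y)) =
    (∑ y, h y * ((if a + b * y = 0 then (Fintype.card L : ℂ) else 0) - 1)
      + Fintype.card K * ∑ y, g y * σ (u / (a + b * y))) / 2 := by
  rw [Finset.sum_comm, Finset.mul_sum, ← Finset.sum_add_distrib, Finset.sum_div]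
  refine Finset.sum_congr rfl fun y _ => ?_
  have e1 := xx_gsum χ u hu0 hu σ h0 hi hs (a + b * y)
  have e2 : ∑ x, χ (x * (a + b * y)) = if a + b * y = 0 then (Fintype.card L : ℂ) else 0 := by
    have := AddChar.sum_mulShift (a + b * y)
      (AddChar.IsPrimitive.of_ne_one (ψ := χ) hχ)
    rw [this]; push_cast; rfl
  have e3 : ∑ x, (if x = 0 then 0 else h y) * χ (x * (a + b * y)) =
      h y * ((if a + b * y = 0 then (Fintype.card L : ℂ) else 0) - 1) := by
    rw [← e2, mul_sub, Finset.mul_sum, mul_one]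
    have : ∀ x, (if x = 0 then 0 else h y) * χ (x * (a + b * y)) =
      h y * χ (x * (a + b * y)) - if x = 0 then h y else 0 := by
      intro x; split_ifs with hx <;> simp [hx]
    simp only [this, Finset.sum_sub_distrib]
    simp
  rw [← e3]
  have e4 : Fintype.card K * (g y * σ (u / (a + b * y))) =
      ∑ x, σ x * g y * χ (x * (a + b * y)) := by
    rw [mul_left_comm, ← e1, Finset.mul_sum]
    refine Finset.sum_congr rfl fun x _ => ?_
    rw [mul_comm x]; ring
  rw [e4, ← Finset.sum_add_distrib, Finset.sum_div]
  refine Finset.sum_congr rfl fun x _ => ?_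
  ring

open Classical in
/-- The set sum as a double sum. -/
theorem xx_setsum (D₀ D₁ A₀ A₁ : Set L) (h00 : (0:L) ∉ D₀) (h01 : (0:L) ∉ D₁)
    (f : L × L → ℂ) :
    ∑ᶠ z ∈ ({w | ∃ x ∈ D₀, ∃ y ∈ A₀, w = (x, x * y)} ∪
      {w | ∃ x ∈ D₁, ∃ y ∈ A₁, w = (x, x * y)} : Set (L × L)), f z =
    ∑ x, ∑ y, if (x ∈ D₀ ∧ y ∈ A₀) ∨ (x ∈ D₁ ∧ y ∈ A₁) then f (x, x * y) else 0 := by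
  rw [finsum_mem_def, finsum_eq_sum_of_fintype, Fintype.sum_prod_type]
  refine Finset.sum_congr rfl fun x _ => ?_
  by_cases hx : x = 0
  · subst hx
    rw [Finset.sum_eq_zero, Finset.sum_eq_zero]
    · intro y _; simp [h00, h01]
    · intro y _
      rw [Set.indicator_of_notMem]
      rintro (⟨x, hx, y, hy, he⟩ | ⟨x, hx, y, hy, he⟩) <;> simp only [Prod.mk.injEq] at he
      · exact h00 (he.1 ▸ hx)
      · exact h01 (he.1 ▸ hx)
  · symm
    refine Fintype.sum_equiv (Equiv.mulLeft₀ x hx) _ _ (fun y => ?_)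
    rw [Set.indicator_apply]
    have : ((x, (Equiv.mulLeft₀ x hx) y) ∈ ({w | ∃ x ∈ D₀, ∃ y ∈ A₀, w = (x, x * y)} ∪
      {w | ∃ x ∈ D₁, ∃ y ∈ A₁, w = (x, x * y)} : Set (L × L))) ↔
        ((x ∈ D₀ ∧ y ∈ A₀) ∨ (x ∈ D₁ ∧ y ∈ A₁)) := by
      have hc : (Equiv.mulLeft₀ x hx) y = x * y := rfl
      simp only [hc, Set.mem_union, Set.mem_ofPred_eq, Prod.mk.injEq]
      constructor
      · rintro (⟨x', hx', y', hy', h1, h2⟩ | ⟨x', hx', y', hy', h1, h2⟩) <;> subst h1 <;>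
          have := mul_left_cancel₀ hx h2 <;> subst this
        · exact Or.inl ⟨hx', hy'⟩
        · exact Or.inr ⟨hx', hy'⟩
      · rintro (⟨h1, h2⟩ | ⟨h1, h2⟩)
        · exact Or.inl ⟨x, h1, y, h2, rfl, rfl⟩
        · exact Or.inr ⟨x, h1, y, h2, rfl, rfl⟩
    simp only [this]
    simp

open Classical in
theorem xx_abstract (q : ℕ) (hK : Fintype.card K = q) (hL : Fintype.card L = q ^ 2) (hq : Odd q)
    (χ : AddChar L ℂ) (hχ : χ ≠ 0) (D₀ D₁ : Set L) (h00 : (0:L) ∉ D₀)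
    (hD : ∀ x, x ∈ D₁ ↔ (x ≠ 0 ∧ x ∉ D₀)) (v : L) (hv0 : v ≠ 0)
    (hv : ∀ x, x ≠ 0 → (v * x ∈ D₀ ↔ x ∉ D₀))
    (hinv : ∀ c : K, c ≠ 0 → ∀ x, (c • x ∈ D₀ ↔ x ∈ D₀))
    (φ : L →ₗ[K] K) (hφ : Function.Surjective φ)
    (T₀ T₁ : Set K) (S₀ S₁ : Set L)
    (hS₀ : S₀ = {x : L | φ x ∈ T₀}) (hS₁ : S₁ = {x : L | φ (x * v) ∈ T₁})
    (hT₀ : T₀.ncard = (q - 1) / 2) (hT₁ : T₁.ncard = (q + 1) / 2)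
    (E : Set (L × L)) (hE : E = {w | ∃ x ∈ D₀, ∃ y ∈ S₀ \ S₁, w = (x, x * y)} ∪
      {w | ∃ x ∈ D₁, ∃ y ∈ S₁ \ S₀, w = (x, x * y)}) :
    E.ncard = (q ^ 4 - 1) / 4 ∧ ∀ a b : L, (a, b) ≠ ((0 : L), (0 : L)) →
      ∑ᶠ z ∈ E, χ (a * z.1 + b * z.2) = ((q : ℂ) ^ 2 - 1) / 4 ∨
      ∑ᶠ z ∈ E, χ (a * z.1 + b * z.2) = (-3 * (q : ℂ) ^ 2 - 1) / 4 := by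
  have h01 : (0:L) ∉ D₁ := by simp [hD]
  have h2 : Module.finrank K L = 2 := by
    have h := Module.card_eq_pow_finrank (K := K) (V := L)
    rw [hL, hK] at h
    exact (Nat.pow_right_injective (hK ▸ Fintype.one_lt_card (α := K) : 2 ≤ q) h).symm
  obtain ⟨u, hu0, hu⟩ := xx_charker (K := K) h2 χ hχ
  -- the sign function
  obtain ⟨σ, hσ⟩ : ∃ σ : L → ℂ, σ = fun x => if x ∈ D₀ then 1 else if x = 0 then 0 else -1 :=
    ⟨_, rfl⟩
  have hσ0 : σ 0 = 0 := by simp [hσ, h00]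
  have hσi : ∀ c : K, c ≠ 0 → ∀ x, σ (c • x) = σ x := by
    intro c hc x
    simp only [hσ, hinv c hc x, smul_eq_zero, hc, false_or]
  have hσv : ∀ x, σ (v * x) = - σ x := by
    intro x
    by_cases hx : x = 0
    · simp [hx, hσ0]
    · by_cases hx' : x ∈ D₀ <;> simp [hσ, hv x hx, hx', hx, hv0]
  have hσ1 : ∀ x, x ≠ 0 → σ x = 1 ∨ σ x = -1 := by
    intro x hx
    by_cases hx' : x ∈ D₀ <;> simp [hσ, hx', hx]
  have hsumv : ∀ τ : L → ℂ, (∀ x, τ (v * x) = - τ x) → ∑ x, τ x = 0 := by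
    intro τ hτ
    have : ∑ x, τ (v * x) = ∑ x, τ x := Fintype.sum_equiv (Equiv.mulLeft₀ v hv0) _ _ (fun x => rfl)
    simp only [hτ, Finset.sum_neg_distrib] at this
    linear_combination -this / 2
  have hσs := hsumv σ hσv
  -- the dual sign function
  obtain ⟨τ, hτ⟩ : ∃ τ : L → ℂ, τ = fun x => σ (u / x) := ⟨_, rfl⟩
  have hτ0 : τ 0 = 0 := by simp [hτ, hσ0]
  have hτi : ∀ c : K, c ≠ 0 → ∀ x, τ (c • x) = τ x := by
    intro c hc x
    simp only [hτ]
    rw [← hσi c hc (u / (c • x))]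
    congr 1
    by_cases hx : x = 0
    · simp [hx]
    · have hc' : algebraMap K L c ≠ 0 := by simpa using hc
      simp only [Algebra.smul_def]; field_simp
  have hτv : ∀ x, τ (v * x) = - τ x := by
    intro x
    simp only [hτ]
    rw [eq_neg_iff_add_eq_zero, add_comm, ← eq_neg_iff_add_eq_zero, ← hσv (u / (v * x))]
    congr 1
    by_cases hx : x = 0
    · simp [hx]
    · field_simp
  have hτ1 : ∀ x, x ≠ 0 → τ x = 1 ∨ τ x = -1 := by
    intro x hx
    simp only [hτ]
    exact hσ1 _ (div_ne_zero hu0 hx)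
  have hτs := hsumv τ hτv
  -- kernel of the functional
  obtain ⟨k, hk0, hk⟩ : ∃ k : L, k ≠ 0 ∧ ∀ w, φ w = 0 ↔ ∃ c : K, c • k = w := by
    refine xx_gen h2 (LinearMap.ker φ) ?_ ?_
    · intro h
      have h3 := LinearMap.finrank_range_add_finrank_ker φ
      have h4 := Submodule.finrank_le (LinearMap.range φ)
      rw [h, h2, finrank_bot] at h3
      rw [Module.finrank_self] at h4
      omega
    · intro h
      rw [LinearMap.ker_eq_top] at h
      obtain ⟨x, hx⟩ := hφ 1
      simp [h] at hx
  obtain ⟨φ1, hφ1⟩ : ∃ φ1 : L →ₗ[K] K, ∀ x, φ1 x = φ (x * v) :=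
    ⟨φ ∘ₗ LinearMap.mulRight K v, fun x => rfl⟩
  have hk1 : ∀ w, φ1 w = 0 ↔ ∃ c : K, c • (k / v) = w := by
    intro w
    rw [hφ1, hk]
    refine exists_congr fun c => ?_
    rw [div_eq_mul_inv, ← smul_mul_assoc, ← div_eq_mul_inv, div_eq_iff hv0]
  have hk10 : k / v ≠ 0 := div_ne_zero hk0 hv0
  have hbij : Function.Bijective (fun y => (φ y, φ1 y)) := by
    rw [Fintype.bijective_iff_injective_and_card]
    refine ⟨?_, by rw [Fintype.card_prod, hK, hL, sq]⟩
    intro x y hxy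
    simp only [Prod.mk.injEq] at hxy
    by_contra hne
    have hz : x - y ≠ 0 := sub_ne_zero.mpr hne
    have z0 : φ (x - y) = 0 := by rw [map_sub, hxy.1, sub_self]
    have z1 : φ1 (x - y) = 0 := by rw [map_sub, hxy.2, sub_self]
    obtain ⟨c, hc⟩ := (hk _).mp z0
    rw [hφ1, hk] at z1
    obtain ⟨d, hd⟩ := z1
    have hc0 : c ≠ 0 := by rintro rfl; exact hz (by rw [← hc, zero_smul])
    have hd0 : d ≠ 0 := by rintro rfl; exact mul_ne_zero hz hv0 (by rw [← hd, zero_smul])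
    have e1 := hσi c hc0 k
    have e2 := hσi d hd0 k
    rw [hc] at e1
    rw [hd, mul_comm, hσv, e1] at e2
    have : σ k = 0 := by linear_combination -e2 / 2
    rcases hσ1 k hk0 with h | h <;> rw [h] at this <;> norm_num at this
  obtain ⟨n, hn⟩ := hq
  have hc0 : (T₀.ncard : ℂ) = ((q:ℂ) - 1) / 2 := by
    rw [hT₀, hn, show (2 * n + 1 - 1) / 2 = n by omega]; push_cast; ring
  have hc1 : (T₁.ncard : ℂ) = ((q:ℂ) + 1) / 2 := by
    rw [hT₁, hn, show (2 * n + 1 + 1) / 2 = n + 1 by omega]; push_cast; ring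
  -- indicator functions
  obtain ⟨s0, hs0⟩ : ∃ s0 : L → ℂ, s0 = fun y => if φ y ∈ T₀ then 1 else 0 := ⟨_, rfl⟩
  obtain ⟨s1, hs1⟩ : ∃ s1 : L → ℂ, s1 = fun y => if φ1 y ∈ T₁ then 1 else 0 := ⟨_, rfl⟩
  have hprod : ∀ f : K × K → ℂ, ∑ y, f (φ y, φ1 y) = ∑ c, ∑ d, f (c, d) := by
    intro f
    rw [← Fintype.sum_prod_type]
    exact Fintype.sum_bijective _ hbij _ _ (fun y => rfl)
  have hs0s : ∑ y, s0 y = q * T₀.ncard := by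
    have := hprod (fun z => if z.1 ∈ T₀ then 1 else 0)
    simp only [hs0]
    rw [this, xx_ncard, Finset.mul_sum]
    refine Finset.sum_congr rfl fun c _ => ?_
    by_cases hc : c ∈ T₀ <;> simp [hc, hK]
  have hs1s : ∑ y, s1 y = q * T₁.ncard := by
    have := hprod (fun z => if z.2 ∈ T₁ then 1 else 0)
    simp only [hs1]
    rw [this, xx_ncard]
    have hX : ∀ X : ℂ, ∑ _c : K, X = q * X := by
      intro X
      rw [Finset.sum_const, Finset.card_univ, hK, nsmul_eq_mul]
    rw [← hX]
  have hs01s : ∑ y, s0 y * s1 y = T₀.ncard * T₁.ncard := by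
    have := hprod (fun z => (if z.1 ∈ T₀ then 1 else 0) * (if z.2 ∈ T₁ then 1 else 0))
    simp only [hs0, hs1]
    rw [this, xx_ncard, xx_ncard, Finset.sum_mul_sum]
  obtain ⟨h, hh⟩ : ∃ h : L → ℂ, h = fun y => s0 y + s1 y - 2 * (s0 y * s1 y) := ⟨_, rfl⟩
  have hhs : ∑ y, h y = ((q:ℂ) ^ 2 + 1) / 2 := by
    simp only [hh, Finset.sum_sub_distrib, Finset.sum_add_distrib, ← Finset.mul_sum]
    rw [hs0s, hs1s, hs01s, hc0, hc1]; ring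
  -- the key formula
  have key : ∀ a b : L, ∑ᶠ z ∈ E, χ (a * z.1 + b * z.2) =
    (∑ y, h y * ((if a + b * y = 0 then (q:ℂ) ^ 2 else 0) - 1)
      + q * ∑ y, (s0 y - s1 y) * τ (a + b * y)) / 2 := by
    intro a b
    have := xx_total χ hχ u hu0 hu σ hσ0 hσi hσs h (fun y => s0 y - s1 y) a b
    rw [hL, hK] at this
    rw [hτ]
    push_cast at this
    rw [← this, hE, xx_setsum _ _ _ _ h00 h01]
    refine Finset.sum_congr rfl fun x _ => Finset.sum_congr rfl fun y _ => ?_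
    have e : a * x + b * (x * y) = x * (a + b * y) := by ring
    rw [e]
    have hm0 : y ∈ S₀ ↔ φ y ∈ T₀ := by rw [hS₀]; rfl
    have hm1 : y ∈ S₁ ↔ φ1 y ∈ T₁ := by rw [hS₁, hφ1]; rfl
    simp only [hσ, hh, hs0, hs1, Set.mem_sdiff, hm0, hm1, hD]
    by_cases hx : x = 0
    · subst hx; simp [h00]
    · by_cases g1 : x ∈ D₀ <;> by_cases g2 : φ y ∈ T₀ <;> by_cases g3 : φ1 y ∈ T₁ <;>
        simp [hx, g1, g2, g3] <;> norm_num
  constructor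
  · have h1 := key 0 0
    simp only [zero_mul, add_zero, AddChar.map_zero_eq_one, if_true, hτ0, mul_zero,
      Finset.sum_const_zero, ← Finset.sum_mul, hhs] at h1
    have h3 : (E.ncard : ℂ) = ∑ᶠ z ∈ E, (1:ℂ) := by
      rw [xx_ncard, finsum_mem_def, finsum_eq_sum_of_fintype]
      rfl
    rw [← h3] at h1
    have h4 : (4 * E.ncard + 1 : ℂ) = q ^ 4 := by rw [h1]; ring
    have h5 : 4 * E.ncard + 1 = q ^ 4 := by exact_mod_cast h4
    omega
  · intro a b hab
    rw [key]
    by_cases hb : b = 0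
    · have ha : a ≠ 0 := by rintro rfl; exact hab (by rw [hb])
      simp only [hb, zero_mul, add_zero, ha, if_false, ← Finset.sum_mul, hhs,
        Finset.sum_sub_distrib, hs0s, hs1s, hc0, hc1]
      rcases hτ1 a ha with h | h <;> rw [h]
      · right; ring
      · left; ring
    · obtain ⟨y0, hy0⟩ : ∃ y0, y0 = -a / b := ⟨_, rfl⟩
      have e : ∀ y, a + b * y = b * (y - y0) := by intro y; rw [hy0]; field_simp; ring
      have e0 : ∀ y, b * (y - y0) = 0 ↔ y = y0 := by intro y; simp [hb, sub_eq_zero]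
      simp only [e, e0]
      have f1 : ∑ y, h y * ((if y = y0 then (q:ℂ) ^ 2 else 0) - 1) =
          h y0 * q ^ 2 - ((q:ℂ) ^ 2 + 1) / 2 := by
        simp only [mul_sub, mul_one, Finset.sum_sub_distrib, hhs]
        simp
      have l0 := xx_Sline φ k hk0 hk τ hτ0 hτi hτs b hb T₀ y0
      have l1 := xx_Sline φ1 (k / v) hk10 hk1 τ hτ0 hτi hτs b hb T₁ y0
      have hneg : τ (b * (k / v)) = - τ (b * k) := by
        rw [eq_neg_iff_add_eq_zero, add_comm, ← eq_neg_iff_add_eq_zero, ← hτv]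
        congr 1; field_simp
      have f2 : ∑ y, (s0 y - s1 y) * τ (b * (y - y0)) =
          τ (b * k) * q * (s0 y0 + s1 y0 - 1) := by
        have g0 : ∑ y, s0 y * τ (b * (y - y0)) = τ (b * k) * (q * s0 y0 - ((q:ℂ) - 1) / 2) := by
          rw [hK, hc0] at l0
          simp only [hs0, ite_mul, one_mul, zero_mul, mul_ite, mul_one, mul_zero] 
          exact l0
        have g1 : ∑ y, s1 y * τ (b * (y - y0)) = - τ (b * k) * (q * s1 y0 - ((q:ℂ) + 1) / 2) := by
          rw [hK, hc1, hneg] at l1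
          simp only [hs1, ite_mul, one_mul, zero_mul, mul_ite, mul_one, mul_zero] 
          exact l1
        simp only [sub_mul, Finset.sum_sub_distrib]
        rw [g0, g1]; ring
      rw [f1, f2]
      simp only [hh, hs0, hs1]
      by_cases g2 : φ y0 ∈ T₀ <;> by_cases g3 : φ1 y0 ∈ T₁ <;>
        rcases hτ1 (b * k) (mul_ne_zero hb hk0) with h | h <;> simp only [g2, g3, h, if_true, if_false]
      all_goals first
        | (left; ring; done)
        | (right; ring; done)

end

theorem xx_Kst (m : ℕ) (hm : 0 < m)
    (Kst : Finset ℕ) (hKsub : ∀ k ∈ Kst, k < 2 * m) (hKcard : Kst.card = m)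
    (hKdisj : ∀ k ∈ Kst, (k + m) % (2 * m) ∉ Kst) (n : ℕ) :
    (n + m) % (2 * m) ∈ Kst ↔ n % (2 * m) ∉ Kst := by
  have hmod : ∀ k, k < 2 * m → ((k + m) % (2 * m) + m) % (2 * m) = k := by
    intro k hk
    rw [Nat.mod_add_mod, show k + m + m = k + 2 * m by ring, Nat.add_mod_right, Nat.mod_eq_of_lt hk]
  have hsh : (n + m) % (2 * m) = (n % (2 * m) + m) % (2 * m) := by rw [Nat.mod_add_mod]
  rw [hsh]
  have hj : n % (2 * m) < 2 * m := Nat.mod_lt _ (by omega)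
  generalize n % (2 * m) = j at hj
  constructor
  · intro h1 h2; exact hKdisj j h2 h1
  · intro h1
    have hinj : Set.InjOn (fun k => (k + m) % (2 * m)) Kst := by
      intro a ha b hb hab
      rw [← hmod a (hKsub a ha), ← hmod b (hKsub b hb)]
      simp only at hab
      rw [hab]
    have hdisj : Disjoint Kst (Kst.image fun k => (k + m) % (2 * m)) := by
      rw [Finset.disjoint_right]
      intro a ha
      obtain ⟨k, hk, rfl⟩ := Finset.mem_image.mp ha
      exact hKdisj k hk
    have hU : Kst ∪ (Kst.image fun k => (k + m) % (2 * m)) = Finset.range (2 * m) := by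
      apply Finset.eq_of_subset_of_card_le
      · intro a ha
        rw [Finset.mem_range]
        rcases Finset.mem_union.mp ha with h | h
        · exact hKsub a h
        · obtain ⟨k, hk, rfl⟩ := Finset.mem_image.mp h
          exact Nat.mod_lt _ (by omega)
      · rw [Finset.card_union_of_disjoint hdisj, Finset.card_image_of_injOn hinj, hKcard,
          Finset.card_range]
        omega
    have : j ∈ Finset.range (2 * m) := Finset.mem_range.mpr hj
    rw [← hU] at this
    rcases Finset.mem_union.mp this with h | h
    · exact absurd h h1
    · obtain ⟨k, hk, rfl⟩ := Finset.mem_image.mp h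
      rw [hmod k (hKsub k hk)]; exact hk

theorem xx_char (p : ℕ) (hp : p.Prime) (L : Type) [Field L] [Fintype L] [CharP L p] :
    ∃ χ : AddChar L ℂ, χ ≠ 0 ∧ ∀ x, psiL p L x = χ x := by
  let _ : Algebra (ZMod p) L := ZMod.algebra L p
  have : Fact p.Prime := ⟨hp⟩
  have hz : IsPrimitiveRoot (zetaP p) p := Complex.isPrimitiveRoot_exp p hp.ne_zero
  let θ : AddChar (ZMod p) ℂ := AddChar.zmodChar p hz.pow_eq_one
  let χ : AddChar L ℂ :=
    { toFun := fun x => θ (Algebra.trace (ZMod p) L x)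
      map_zero_eq_one' := by simp
      map_add_eq_mul' := fun a b => by simp [AddChar.map_add_eq_mul] }
  refine ⟨χ, ?_, fun x => rfl⟩
  intro h
  obtain ⟨x, hx⟩ := Algebra.trace_surjective (ZMod p) L 1
  have h1 : χ x = 1 := by rw [h]; rfl
  have h2 : θ (Algebra.trace (ZMod p) L x) = 1 := h1
  rw [hx, AddChar.zmodChar_apply] at h2
  have h3 : (1 : ZMod p).val = 1 := ZMod.val_one p
  rw [h3, pow_one] at h2
  exact hz.ne_one hp.one_lt h2

theorem xx_order (L : Type) [Field L] [Fintype L] (hc : 2 < Fintype.card L) (ω : L)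
    (hω : IsPrim L ω) : ω ≠ 0 ∧ orderOf ω = Fintype.card L - 1 := by
  classical
  have h0 : ω ≠ 0 := by
    rintro rfl
    have : 1 < Fintype.card Lˣ := by rw [Fintype.card_units]; omega
    have := Fintype.one_lt_card_iff_nontrivial.mp this
    obtain ⟨x, hx⟩ := exists_ne (1 : Lˣ)
    obtain ⟨n, hn⟩ := hω x x.ne_zero
    rcases Nat.eq_zero_or_pos n with rfl | h
    · exact hx (Units.ext (by simpa using hn))
    · rw [zero_pow h.ne'] at hn
      exact x.ne_zero hn
  refine ⟨h0, ?_⟩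
  have h1 : ∀ x, x ∈ Subgroup.zpowers (Units.mk0 ω h0) := by
    intro x
    obtain ⟨n, hn⟩ := hω x x.ne_zero
    exact ⟨n, Units.ext (by simp [hn])⟩
  have h2 := orderOf_eq_card_of_forall_mem_zpowers h1
  rw [← orderOf_units, Nat.card_eq_fintype_card, Fintype.card_units] at h2
  exact h2

theorem xx_powmod {L : Type} [Field L] {ω : L} (h0 : ω ≠ 0) {a b : ℕ} (h : ω ^ a = ω ^ b) :
    a ≡ b [MOD orderOf ω] := by
  have h1 : (Units.mk0 ω h0) ^ a = (Units.mk0 ω h0) ^ b := Units.ext (by simpa using h)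
  have h2 := pow_eq_pow_iff_modEq.mp h1
  rw [← orderOf_units] at h2
  exact h2

/-- Theorem 3.2(2): if `|T₀| = (q−1)/2` and `|T₁| = (q+1)/2` then `E₁` is of type Q. -/
theorem semiprimitive_E1_typeQ
    (p s q m l t : ℕ) (hp : p.Prime) (hpodd : p ≠ 2) (hs : 0 < s) (hq : q = p ^ s)
    (hm : 0 < m) (hdvd : 2 * m ∣ q + 1)
    (hl : 0 < l) (hldvd : 2 * m ∣ p ^ l + 1)
    (hlmin : ∀ l', 0 < l' → 2 * m ∣ p ^ l' + 1 → l ≤ l')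
    (ht : s = l * t)
    (K L : Type) [Field K] [Fintype K] [Field L] [Fintype L] [Algebra K L] [CharP L p]
    (hK : Fintype.card K = q) (hL : Fintype.card L = q ^ 2)
    (ω : L) (hω : IsPrim L ω)
    (Kst : Finset ℕ) (hKsub : ∀ k ∈ Kst, k < 2 * m) (hKcard : Kst.card = m)
    (hKdisj : ∀ k ∈ Kst, (k + m) % (2 * m) ∉ Kst)
    (D₀ D₁ : Set L)
    (hD₀ : D₀ = ⋃ i ∈ Kst, cyc L ω (2 * m) i)
    (hD₁ : D₁ = ⋃ i ∈ Kst, cyc L ω (2 * m) (i + m))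
    (T₀ T₁ : Set K)
    (S₀ S₁ : Set L)
    (hS₀ : S₀ = {x : L | Algebra.trace K L x ∈ T₀})
    (hS₁ : S₁ = {x : L | Algebra.trace K L (x * ω ^ m) ∈ T₁})
    (ε : ℕ) (hε : ε = if Even ((p ^ l + 1) / (2 * m)) ∧ Odd t then 1 else 0)
    (Dε : Set L) (hDε : Dε = if ε = 0 then D₀ else D₁)
    (A₀ A₁ : Set L) (hA₀ : A₀ = S₀ \ S₁) (hA₁ : A₁ = S₁ \ S₀)
    (hT₀ : T₀.ncard = (q - 1) / 2) (hT₁ : T₁.ncard = (q + 1) / 2)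
    (E₁ : Set (L × L))
    (hE₁ : E₁ = {w | ∃ x ∈ D₀, ∃ y ∈ A₀, w = (x, x * y)} ∪
      {w | ∃ x ∈ D₁, ∃ y ∈ A₁, w = (x, x * y)})
    : IsTypeQ p q L E₁ := by
  subst hA₀ hA₁
  have hodd : Odd q := by
    obtain ⟨c, hc⟩ := hdvd
    rw [mul_assoc] at hc
    exact ⟨m * c - 1, by omega⟩
  have hq2 : 1 < q := hK ▸ Fintype.one_lt_card (α := K)
  have hq3 : 3 ≤ q := by
    obtain ⟨c, hc⟩ := hodd
    omega
  have hsq : q ^ 2 - 1 = (q + 1) * (q - 1) := by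
    obtain ⟨r, rfl⟩ : ∃ r, q = r + 1 := ⟨q - 1, by omega⟩
    have : (r + 1) ^ 2 = (r + 1 + 1) * r + 1 := by ring
    rw [this]; simp
  obtain ⟨hω0, hord⟩ := xx_order L (by rw [hL]; nlinarith) ω hω
  rw [hL, hsq] at hord
  have h2m : 2 * m ∣ orderOf ω := hord ▸ Dvd.dvd.mul_right hdvd _
  have hcyc : ∀ n i, ω ^ n ∈ cyc L ω (2 * m) i → n ≡ i [MOD 2 * m] := by
    rintro n i ⟨k, hk⟩
    rw [← pow_mul, ← pow_add] at hk
    have h1 : n ≡ i + 2 * m * k [MOD orderOf ω] :=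
      xx_powmod hω0 hk
    have h2 := h1.of_dvd h2m
    refine h2.trans ?_
    simp [Nat.ModEq]
  have hmemD₀ : ∀ n, ω ^ n ∈ D₀ ↔ n % (2 * m) ∈ Kst := by
    intro n
    rw [hD₀]
    simp only [Set.mem_iUnion]
    constructor
    · rintro ⟨i, hi, h⟩
      have h1 := hcyc n i h
      rw [Nat.ModEq, Nat.mod_eq_of_lt (hKsub i hi)] at h1
      rw [h1]; exact hi
    · intro h
      refine ⟨_, h, n / (2 * m), ?_⟩
      rw [← pow_mul, ← pow_add, Nat.mod_add_div]
  have hmemD₁ : ∀ n, ω ^ n ∈ D₁ ↔ (n + m) % (2 * m) ∈ Kst := by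
    intro n
    rw [hD₁]
    simp only [Set.mem_iUnion]
    constructor
    · rintro ⟨i, hi, h⟩
      have h1 := (hcyc n (i + m) h).add_right m
      have h2 : i + m + m ≡ i [MOD 2 * m] := by
        rw [show i + m + m = i + 2 * m by ring]; simp [Nat.ModEq]
      have h3 := h1.trans h2
      rw [Nat.ModEq, Nat.mod_eq_of_lt (hKsub i hi)] at h3
      rw [h3]; exact hi
    · intro h
      -- ω ^ n = ω ^ (n + orderOf ω * m)
      refine ⟨_, h, (n + m) / (2 * m) + (orderOf ω / (2 * m) - 1), ?_⟩
      obtain ⟨c, hc⟩ := h2m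
      have hcpos : 0 < c := by
        rcases Nat.eq_zero_or_pos c with rfl | h
        · rw [mul_zero, hord] at hc
          have : 0 < (q + 1) * (q - 1) := Nat.mul_pos (by omega) (by omega)
          omega
        · exact h
      obtain ⟨d, rfl⟩ : ∃ d, c = d + 1 := ⟨c - 1, by omega⟩
      rw [hc, Nat.mul_div_cancel_left _ (by omega : 0 < 2 * m), ← pow_mul, ← pow_add]
      have e1 := Nat.mod_add_div (n + m) (2 * m)
      have e2 : (n + m) % (2 * m) + m + 2 * m * ((n + m) / (2 * m) + (d + 1 - 1)) =
          n + orderOf ω := by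
        rw [hc, Nat.add_sub_cancel, mul_add]
        have e3 : 2 * m * (d + 1) = 2 * m * d + 2 * m := by ring
        rw [e3]
        omega
      rw [e2, pow_add, pow_orderOf_eq_one, mul_one]
  have hKst := xx_Kst m hm Kst hKsub hKcard hKdisj
  have hcyc0 : ∀ i, (0 : L) ∉ cyc L ω (2 * m) i := by
    rintro i ⟨k, hk⟩
    exact mul_ne_zero (pow_ne_zero _ hω0) (pow_ne_zero _ (pow_ne_zero _ hω0)) hk.symm
  have h00 : (0 : L) ∉ D₀ := by
    rw [hD₀]; simp only [Set.mem_iUnion]; rintro ⟨i, _, h⟩; exact hcyc0 _ h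
  have h01 : (0 : L) ∉ D₁ := by
    rw [hD₁]; simp only [Set.mem_iUnion]; rintro ⟨i, _, h⟩; exact hcyc0 _ h
  have hD : ∀ x, x ∈ D₁ ↔ (x ≠ 0 ∧ x ∉ D₀) := by
    intro x
    by_cases hx : x = 0
    · subst hx; simp [h01]
    · obtain ⟨n, rfl⟩ := hω x hx
      rw [hmemD₀, hmemD₁, hKst]
      simp [hω0]
  have hv : ∀ x, x ≠ 0 → (ω ^ m * x ∈ D₀ ↔ x ∉ D₀) := by
    intro x hx
    obtain ⟨n, rfl⟩ := hω x hx
    rw [← pow_add, hmemD₀, hmemD₀, add_comm m n, hKst]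
  have hinv : ∀ c : K, c ≠ 0 → ∀ x, (c • x ∈ D₀ ↔ x ∈ D₀) := by
    intro c hc x
    by_cases hx : x = 0
    · simp [hx]
    obtain ⟨n, rfl⟩ := hω x hx
    obtain ⟨r, hr⟩ := hω (algebraMap K L c) (by simpa using hc)
    have h1 : ω ^ (r * (q - 1)) = 1 := by
      rw [pow_mul, ← hr, ← map_pow, ← hK, FiniteField.pow_card_sub_one_eq_one c hc, map_one]
    have h2 := orderOf_dvd_of_pow_eq_one h1
    rw [hord] at h2
    have h3 : q + 1 ∣ r := Nat.dvd_of_mul_dvd_mul_right (by omega) h2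
    obtain ⟨d, rfl⟩ := hdvd.trans h3
    rw [Algebra.smul_def, hr, ← pow_add, hmemD₀, hmemD₀, Nat.mul_add_mod]
  obtain ⟨χ, hχ, hpsi⟩ := xx_char p hp L
  have hmain := xx_abstract (K := K) q hK hL hodd χ hχ D₀ D₁ h00 hD (ω ^ m)
    (pow_ne_zero _ hω0) hv hinv (Algebra.trace K L) (Algebra.trace_surjective K L)
    T₀ T₁ S₀ S₁ hS₀ hS₁ hT₀ hT₁ E₁ hE₁
  unfold IsTypeQ psiSum
  simp only [hpsi]
  exact hmain

end
end

section
/- In the semi-primitive cyclotomic setting (with T_0, T_1 arbitrary subsets of F_q), let a, b ∈ F_{q²} with b ≠ 0, and define U_2 = Σ_{x ∈ D_1} Σ_{y ∈ S_1} ζ_p^{Tr_{q²/p}(x(a+by))}. Then U_2 = −q|T_1| + q² if −ab^{−1} ∈ S_1 and b^{−1} ∈ D_0; U_2 = −q|T_1| if −ab^{−1} ∉ S_1 and b^{−1} ∈ D_0; and U_2 = 0 if b^{−1} ∈ D_1. -/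
noncomputable section

open Classical in
lemma aux_core {K L : Type} [Field K] [Fintype K] [Field L] [Fintype L] [Algebra K L]
    (q : ℕ) (hq0 : q ≠ 0) (hK : Fintype.card K = q) (hL : Fintype.card L = q ^ 2)
    (χ : AddChar K ℂ) (hχ : χ.IsPrimitive) (Ψ : AddChar L ℂ) (hΨ : Ψ.IsPrimitive)
    (hχΨ : ∀ x, Ψ x = χ (Algebra.trace K L x))
    (T : Finset K) (D : Finset L) (a b w : L) (hb : b ≠ 0) :
    ∑ x ∈ D, ∑ y ∈ Finset.univ.filter (fun y => Algebra.trace K L (y * w) ∈ T),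
      Ψ (x * (a + b * y)) =
    q * ∑ u ∈ T, ∑ z : K, if algebraMap K L z * w * b⁻¹ ∈ D then
      χ (z * (u + Algebra.trace K L (a * b⁻¹ * w))) else 0 := by
  have hqC : (q : ℂ) ≠ 0 := by exact_mod_cast hq0
  have hsmul : ∀ (z : K) (x : L), Ψ (algebraMap K L z * x) = χ (z * Algebra.trace K L x) := by
    intro z x
    rw [hχΨ, ← Algebra.smul_def, map_smul, smul_eq_mul]
  have hind : ∀ y : L, (if Algebra.trace K L (y * w) ∈ T then (q : ℂ) else 0) =
      ∑ u ∈ T, ∑ z : K, χ (z * (u - Algebra.trace K L (y * w))) := by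
    intro y
    have : ∀ u : K, ∑ z : K, χ (z * (u - Algebra.trace K L (y * w))) =
        if Algebra.trace K L (y * w) = u then (q : ℂ) else 0 := by
      intro u
      rw [AddChar.sum_mulShift _ hχ, hK]
      by_cases h : Algebra.trace K L (y * w) = u
      · simp [h]
      · have h' : u - Algebra.trace K L (y * w) ≠ 0 := fun h0 => h (sub_eq_zero.mp h0).symm
        simp [h, h']
    simp_rw [this]
    rw [Finset.sum_ite_eq]
  apply mul_left_cancel₀ hqC
  have hterm : ∀ (x y : L) (u z : K), χ (z * (u - Algebra.trace K L (y * w))) * Ψ (x * (a + b * y))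
      = χ (z * u) * Ψ (x * a) * Ψ (y * (x * b - algebraMap K L z * w)) := by
    intro x y u z
    have h1 : y * (x * b - algebraMap K L z * w) = x * b * y + algebraMap K L (-z) * (y * w) := by
      rw [map_neg]; ring
    have h2 : z * (u - Algebra.trace K L (y * w)) = z * u + (-z) * Algebra.trace K L (y * w) := by
      ring
    have h3 : x * (a + b * y) = x * a + x * b * y := by ring
    rw [h1, h2, h3, AddChar.map_add_eq_mul, AddChar.map_add_eq_mul, AddChar.map_add_eq_mul, hsmul]
    ring
  calc (q : ℂ) * ∑ x ∈ D, ∑ y ∈ Finset.univ.filter (fun y => Algebra.trace K L (y * w) ∈ T),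
      Ψ (x * (a + b * y))
      = ∑ x ∈ D, ∑ y : L, (if Algebra.trace K L (y * w) ∈ T then (q : ℂ) else 0)
          * Ψ (x * (a + b * y)) := by
        rw [Finset.mul_sum]
        refine Finset.sum_congr rfl fun x _ => ?_
        rw [Finset.sum_filter, Finset.mul_sum]
        refine Finset.sum_congr rfl fun y _ => ?_
        split_ifs <;> simp
    _ = ∑ x ∈ D, ∑ y : L, ∑ u ∈ T, ∑ z : K,
          χ (z * u) * Ψ (x * a) * Ψ (y * (x * b - algebraMap K L z * w)) := by
        refine Finset.sum_congr rfl fun x _ => Finset.sum_congr rfl fun y _ => ?_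
        rw [hind, Finset.sum_mul]
        refine Finset.sum_congr rfl fun u _ => ?_
        rw [Finset.sum_mul]
        exact Finset.sum_congr rfl fun z _ => hterm x y u z
    _ = ∑ x ∈ D, ∑ u ∈ T, ∑ z : K, ∑ y : L,
          χ (z * u) * Ψ (x * a) * Ψ (y * (x * b - algebraMap K L z * w)) := by
        refine Finset.sum_congr rfl fun x _ => ?_
        rw [Finset.sum_comm]
        refine Finset.sum_congr rfl fun u _ => ?_
        rw [Finset.sum_comm]
    _ = ∑ x ∈ D, ∑ u ∈ T, ∑ z : K, 
          if algebraMap K L z * w * b⁻¹ = x then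
            (q : ℂ) ^ 2 * χ (z * (u + Algebra.trace K L (a * b⁻¹ * w))) else 0 := by
        refine Finset.sum_congr rfl fun x _ => Finset.sum_congr rfl fun u _ =>
          Finset.sum_congr rfl fun z _ => ?_
        rw [← Finset.mul_sum, AddChar.sum_mulShift _ hΨ, hL]
        by_cases h : algebraMap K L z * w * b⁻¹ = x
        · have h0 : x * b - algebraMap K L z * w = 0 := by
            rw [← h]; field_simp; ring
          have h1 : x * a = algebraMap K L z * (a * b⁻¹ * w) := by rw [← h]; ring
          rw [if_pos h0, if_pos h, h1, hsmul, mul_add, AddChar.map_add_eq_mul]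
          push_cast; ring
        · have h0 : x * b - algebraMap K L z * w ≠ 0 := by
            intro h0
            apply h
            rw [← sub_eq_zero.mp h0]; field_simp
          rw [if_neg h0, if_neg h]; simp
    _ = ∑ u ∈ T, ∑ z : K, ∑ x ∈ D,
          if algebraMap K L z * w * b⁻¹ = x then
            (q : ℂ) ^ 2 * χ (z * (u + Algebra.trace K L (a * b⁻¹ * w))) else 0 := by
        rw [Finset.sum_comm]
        refine Finset.sum_congr rfl fun u _ => ?_
        rw [Finset.sum_comm]
    _ = _ := by
        rw [Finset.mul_sum, Finset.mul_sum]
        refine Finset.sum_congr rfl fun u _ => ?_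
        rw [Finset.mul_sum, Finset.mul_sum]
        refine Finset.sum_congr rfl fun z _ => ?_
        rw [Finset.sum_ite_eq]
        split_ifs
        · ring
        · simp

lemma aux_char (p s q : ℕ) (hp : p.Prime) (hs : 0 < s) (hq : q = p ^ s)
    (K L : Type) [Field K] [Fintype K] [Field L] [Fintype L] [Algebra K L] [CharP L p] :
    ∃ χ : AddChar K ℂ, ∃ Ψ : AddChar L ℂ, χ.IsPrimitive ∧ Ψ.IsPrimitive ∧
      (∀ x, Ψ x = χ (Algebra.trace K L x)) ∧ ∀ x, psiL p L x = Ψ x := by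
  haveI : Fact p.Prime := ⟨hp⟩
  haveI : CharP K p := (algebraMap K L).charP (algebraMap K L).injective p
  letI : Algebra (ZMod p) L := ZMod.algebra L p
  letI : Algebra (ZMod p) K := ZMod.algebra K p
  haveI : IsScalarTower (ZMod p) K L := IsScalarTower.of_algebraMap_eq' (Subsingleton.elim _ _)
  haveI : Module.Finite (ZMod p) K := Module.Finite.of_finite
  haveI : Module.Finite K L := Module.Finite.of_finite
  haveI : Module.Finite (ZMod p) L := Module.Finite.of_finite
  let e : AddChar (ZMod p) ℂ := ZMod.stdAddChar
  have he : e ≠ 1 := by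
    have := ZMod.isPrimitive_stdAddChar p (one_ne_zero)
    rwa [AddChar.mulShift_one] at this
  obtain ⟨c, hc⟩ := AddChar.ne_one_iff.mp he
  let χ : AddChar K ℂ := e.compAddMonoidHom (Algebra.trace (ZMod p) K).toAddMonoidHom
  let Ψ : AddChar L ℂ := e.compAddMonoidHom (Algebra.trace (ZMod p) L).toAddMonoidHom
  refine ⟨χ, Ψ, ?_, ?_, ?_, ?_⟩
  · apply AddChar.IsPrimitive.of_ne_one
    obtain ⟨x, hx⟩ := Algebra.trace_surjective (ZMod p) K c
    refine AddChar.ne_one_iff.mpr ⟨x, ?_⟩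
    change e (Algebra.trace (ZMod p) K x) ≠ 1
    rwa [hx]
  · apply AddChar.IsPrimitive.of_ne_one
    obtain ⟨x, hx⟩ := Algebra.trace_surjective (ZMod p) L c
    refine AddChar.ne_one_iff.mpr ⟨x, ?_⟩
    change e (Algebra.trace (ZMod p) L x) ≠ 1
    rwa [hx]
  · intro x
    change e (Algebra.trace (ZMod p) L x) = e (Algebra.trace (ZMod p) K (Algebra.trace K L x))
    rw [Algebra.trace_trace]
  · intro x
    change zetaP p ^ (Algebra.trace (ZMod p) L x).val = ZMod.stdAddChar (Algebra.trace (ZMod p) L x)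
    rw [ZMod.stdAddChar_apply, ZMod.toCircle_apply, zetaP, ← Complex.exp_nat_mul]
    congr 1
    ring

lemma aux_order (L : Type) [Field L] [Fintype L] (ω : L) (hω : IsPrim L ω) (hω0 : ω ≠ 0) (i j : ℕ) :
    ω ^ i = ω ^ j ↔ i ≡ j [MOD (Fintype.card L - 1)] := by
  let w : Lˣ := Units.mk0 ω hω0
  have hw : orderOf w = Fintype.card L - 1 := by
    classical
    rw [← Fintype.card_units, ← Nat.card_eq_fintype_card]
    apply orderOf_eq_card_of_forall_mem_zpowers
    intro x
    obtain ⟨n, hn⟩ := hω x x.ne_zero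
    refine ⟨n, ?_⟩
    ext
    simp [w, hn]
  rw [← hw, ← pow_eq_pow_iff_modEq, Units.ext_iff]
  simp [w]

lemma aux_cyc (L : Type) [Field L] [Fintype L] (ω : L) (hω : IsPrim L ω) (hω0 : ω ≠ 0)
    (N : ℕ) (hN : N ∣ Fintype.card L - 1) (n i : ℕ) :
    ω ^ n ∈ cyc L ω N i ↔ n ≡ i [MOD N] := by
  constructor
  · rintro ⟨k, hk⟩
    rw [← pow_mul, ← pow_add, aux_order L ω hω hω0] at hk
    have := hk.of_dvd hN
    refine this.trans ?_
    simp [Nat.ModEq]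
  · intro h
    have hc : 1 ≤ Fintype.card L - 1 := by
      have := Fintype.one_lt_card (α := L); omega
    set M := Fintype.card L - 1 with hM
    have hle : i ≤ n + M * i := by nlinarith
    have h2 : i ≡ n + M * i [MOD N] := by
      refine h.symm.trans ?_
      have : M * i ≡ 0 [MOD N] := (Nat.modEq_zero_iff_dvd).mpr (hN.mul_right i)
      simpa using (Nat.ModEq.add_left n this).symm
    obtain ⟨k, hk⟩ := (Nat.modEq_iff_dvd' hle).mp h2
    refine ⟨k, ?_⟩
    rw [← pow_mul, ← pow_add, aux_order L ω hω hω0, ← hM]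
    have : i + N * k = n + M * i := by omega
    rw [this]
    simp [Nat.ModEq]

/-- Lemma 3.6: evaluation of `U₂`. -/
theorem semiprimitive_U2
    (p s q m l t : ℕ) (hp : p.Prime) (hpodd : p ≠ 2) (hs : 0 < s) (hq : q = p ^ s)
    (hm : 0 < m) (hdvd : 2 * m ∣ q + 1)
    (hl : 0 < l) (hldvd : 2 * m ∣ p ^ l + 1)
    (hlmin : ∀ l', 0 < l' → 2 * m ∣ p ^ l' + 1 → l ≤ l')
    (ht : s = l * t)
    (K L : Type) [Field K] [Fintype K] [Field L] [Fintype L] [Algebra K L] [CharP L p]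
    (hK : Fintype.card K = q) (hL : Fintype.card L = q ^ 2)
    (ω : L) (hω : IsPrim L ω)
    (Kst : Finset ℕ) (hKsub : ∀ k ∈ Kst, k < 2 * m) (hKcard : Kst.card = m)
    (hKdisj : ∀ k ∈ Kst, (k + m) % (2 * m) ∉ Kst)
    (D₀ D₁ : Set L)
    (hD₀ : D₀ = ⋃ i ∈ Kst, cyc L ω (2 * m) i)
    (hD₁ : D₁ = ⋃ i ∈ Kst, cyc L ω (2 * m) (i + m))
    (T₀ T₁ : Set K)
    (S₀ S₁ : Set L)
    (hS₀ : S₀ = {x : L | Algebra.trace K L x ∈ T₀})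
    (hS₁ : S₁ = {x : L | Algebra.trace K L (x * ω ^ m) ∈ T₁})
    (a b : L) (hb : b ≠ 0)
    (U₂ : ℂ) (hU₂ : U₂ = ∑ᶠ x ∈ D₁, ∑ᶠ y ∈ S₁, psiL p L (x * (a + b * y)))
    : (-a * b⁻¹ ∈ S₁ ∧ b⁻¹ ∈ D₀ → U₂ = -(q : ℂ) * T₁.ncard + (q : ℂ) ^ 2) ∧
      (-a * b⁻¹ ∉ S₁ ∧ b⁻¹ ∈ D₀ → U₂ = -(q : ℂ) * T₁.ncard) ∧
      (b⁻¹ ∈ D₁ → U₂ = 0) := by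
  classical
  haveI : Fact p.Prime := ⟨hp⟩
  have hq2 : 2 ≤ q := by
    rw [← hK]; exact Fintype.one_lt_card
  have hω0 : ω ≠ 0 := by
    rintro rfl
    obtain ⟨n, hn⟩ := hω (-1) (by simp)
    rcases Nat.eq_zero_or_pos n with rfl | h
    · rw [pow_zero] at hn
      have : Fact (2 < p) := ⟨by have := hp.two_le; omega⟩
      exact CharP.neg_one_ne_one L p hn
    · rw [zero_pow h.ne'] at hn
      simp at hn
  have hcard : Fintype.card L - 1 = (q + 1) * (q - 1) := by
    rw [hL]; simpa using Nat.sq_sub_sq q 1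
  have hN : 2 * m ∣ Fintype.card L - 1 := by rw [hcard]; exact hdvd.mul_right _
  have hmem₀ : ∀ n, ω ^ n ∈ D₀ ↔ ∃ i ∈ Kst, n ≡ i [MOD (2 * m)] := by
    intro n
    simp [hD₀, aux_cyc L ω hω hω0 _ hN]
  have hmem₁ : ∀ n, ω ^ n ∈ D₁ ↔ ∃ i ∈ Kst, n ≡ i + m [MOD (2 * m)] := by
    intro n
    simp [hD₁, aux_cyc L ω hω hω0 _ hN]
  have hz0 : (0 : L) ∉ D₁ := by
    simp only [hD₁, cyc, Set.mem_iUnion, not_exists]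
    rintro i _ ⟨k, hk⟩
    exact mul_ne_zero (pow_ne_zero _ hω0) (pow_ne_zero _ (pow_ne_zero _ hω0)) hk.symm
  obtain ⟨e, he⟩ := hω b⁻¹ (inv_ne_zero hb)
  have hmul : ∀ z : K, algebraMap K L z * ω ^ m * b⁻¹ ∈ D₁ ↔ z ≠ 0 ∧ b⁻¹ ∈ D₀ := by
    intro z
    by_cases hz : z = 0
    · simp [hz, hz0]
    have hz' : algebraMap K L z ≠ 0 := by simpa using hz
    obtain ⟨n, hn⟩ := hω _ hz'
    have hpow : ω ^ (n * (q - 1)) = ω ^ 0 := by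
      rw [pow_mul, ← hn, ← map_pow, ← hK, FiniteField.pow_card_sub_one_eq_one z hz]; simp
    rw [aux_order L ω hω hω0, hcard, Nat.modEq_zero_iff_dvd] at hpow
    have hdn : 2 * m ∣ n := hdvd.trans (Nat.dvd_of_mul_dvd_mul_right (by omega) hpow)
    have hn0 : n ≡ 0 [MOD (2 * m)] := Nat.modEq_zero_iff_dvd.mpr hdn
    rw [hn, he, ← pow_add, ← pow_add, hmem₁, hmem₀]
    simp only [ne_eq, hz, not_false_eq_true, true_and]
    refine exists_congr fun i => and_congr_right fun _ => ?_
    have h1 : n + m + e ≡ e + m [MOD (2 * m)] := by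
      have := hn0.add_right (m + e)
      rw [zero_add, ← add_assoc, add_comm m e] at this
      exact this
    constructor
    · intro h
      exact Nat.ModEq.add_right_cancel' m (h1.symm.trans h)
    · intro h
      exact h1.trans (h.add_right m)
  have hdisj : b⁻¹ ∈ D₁ → b⁻¹ ∉ D₀ := by
    rw [he, hmem₁, hmem₀]
    rintro ⟨i, hi, h⟩ ⟨j, hj, h'⟩
    apply hKdisj i hi
    have h2 : i + m ≡ j [MOD (2 * m)] := h.symm.trans h'
    unfold Nat.ModEq at h2
    rw [h2, Nat.mod_eq_of_lt (hKsub j hj)]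
    exact hj
  obtain ⟨χ, Ψ, hχ, hΨ, hχΨ, hψ⟩ := aux_char p s q hp hs hq K L
  have hmain := aux_core q (by omega) hK hL χ hχ Ψ hΨ hχΨ T₁.toFinset D₁.toFinset a b (ω ^ m) hb
  have hU : U₂ = ∑ x ∈ D₁.toFinset, ∑ y ∈ Finset.univ.filter
      (fun y => Algebra.trace K L (y * ω ^ m) ∈ T₁.toFinset), Ψ (x * (a + b * y)) := by
    rw [hU₂, finsum_mem_eq_toFinset_sum]
    refine Finset.sum_congr rfl fun x _ => ?_
    rw [finsum_mem_eq_toFinset_sum]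
    refine Finset.sum_congr ?_ fun y _ => hψ _
    ext y
    simp [hS₁]
  rw [hmain] at hU
  simp only [Set.mem_toFinset, hmul] at hU
  have hbad : b⁻¹ ∉ D₀ → U₂ = 0 := by
    intro h
    rw [hU]; simp [h]
  have hgood : b⁻¹ ∈ D₀ → U₂ = -(q : ℂ) * T₁.ncard +
      (if -a * b⁻¹ ∈ S₁ then (q : ℂ) ^ 2 else 0) := by
    intro h
    have hin : ∀ v : K, (∑ z : K, if z ≠ 0 ∧ b⁻¹ ∈ D₀ then χ (z * v) else 0) =
        (if v = 0 then (q : ℂ) else 0) - 1 := by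
      intro v
      have h1 := AddChar.sum_mulShift v hχ
      rw [hK] at h1
      have h2 : ∀ z : K, (if z ≠ 0 ∧ b⁻¹ ∈ D₀ then χ (z * v) else 0) =
          χ (z * v) - if z = 0 then 1 else 0 := by
        intro z
        by_cases hz : z = 0 <;> simp [hz, h]
      simp_rw [h2]
      rw [Finset.sum_sub_distrib, h1]
      simp
    rw [hU]
    simp_rw [hin]
    have hiff : -a * b⁻¹ ∈ S₁ ↔ -Algebra.trace K L (a * b⁻¹ * ω ^ m) ∈ T₁ := by
      rw [hS₁, Set.mem_setOf_eq, ← map_neg]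
      simp only [neg_mul]
    have hsum : ∑ u ∈ T₁.toFinset,
        (if u + Algebra.trace K L (a * b⁻¹ * ω ^ m) = 0 then (q : ℂ) else 0) =
        if -a * b⁻¹ ∈ S₁ then (q : ℂ) else 0 := by
      simp_rw [add_eq_zero_iff_eq_neg]
      rw [Finset.sum_ite_eq']
      simp only [Set.mem_toFinset, hiff]
    rw [Finset.sum_sub_distrib, hsum, Finset.sum_const, Set.ncard_eq_toFinset_card']
    split_ifs <;> simp <;> ring
  refine ⟨fun h => ?_, fun h => ?_, fun h => hbad (hdisj h)⟩
  · rw [hgood h.2, if_pos h.1]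
  · rw [hgood h.2, if_neg h.1, add_zero]

end
end
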